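/- arXiv:2411.07051 — 2 statements merged into one kernel-verified Lean document; each statement's English description precedes it below -/
import Mathlib

section
/- Let p ≥ 1 and let D = {(−1,−1), (1,−1), (1,1), (−1,1)} be the set of vertices of Q = [−1,1]². For every isometry Φ : 𝒲_p(Q) → 𝒲_p(Q) there exists an isometry Ψ of (Q, d_m) such that (Φ ∘ Ψ_#)(δ_x) = δ_x for every x ∈ D. -/
open MeasureTheory

/-- The `p`-Wasserstein distance between two measures, defined as the infimum over all
couplings `π` of `μ` and `ν` of `(∬ d(x,y)^p dπ)^(1/p)`. -/
noncomputable def Wdist {X : Type*} [MeasurableSpace X] [PseudoMetricSpace X] (p : ℝ)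
    (μ ν : Measure X) : ℝ :=
  (⨅ π ∈ {π : Measure (X × X) | π.map Prod.fst = μ ∧ π.map Prod.snd = ν},
    (∫⁻ q, edist q.1 q.2 ^ p ∂π) ^ (1 / p)).toReal

/-- The `p`-Wasserstein space over `X`: Borel probability measures on `X` with finite
`p`-th moment. -/
def WSet (X : Type*) [MeasurableSpace X] [PseudoMetricSpace X] (p : ℝ) : Set (Measure X) :=
  {μ | IsProbabilityMeasure μ ∧ ∃ x₀ : X, ∫⁻ x, edist x x₀ ^ p ∂μ < ⊤}

/-- An isometry of the underlying metric space: a distance-preserving bijection. -/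
def IsIsom {X : Type*} [PseudoMetricSpace X] (T : X → X) : Prop :=
  Function.Bijective T ∧ ∀ x y, dist (T x) (T y) = dist x y

/-- An isometry of the `p`-Wasserstein space over `X`: a bijection of the space of
probability measures with finite `p`-th moment preserving the Wasserstein distance. -/
def IsWIsometry (X : Type*) [MeasurableSpace X] [PseudoMetricSpace X] (p : ℝ)
    (Φ : Measure X → Measure X) : Prop :=
  Set.BijOn Φ (WSet X p) (WSet X p) ∧
    ∀ μ ∈ WSet X p, ∀ ν ∈ WSet X p, Wdist p (Φ μ) (Φ ν) = Wdist p μ ν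

/-- The (topological) support of a measure. -/
def msupport {X : Type*} [TopologicalSpace X] [MeasurableSpace X] (μ : Measure X) : Set X :=
  {x | ∀ U : Set X, IsOpen U → x ∈ U → μ U ≠ 0}

def diagLine (ε a : ℝ) : Set (ℝ × ℝ) := {z | z.2 = ε * z.1 + a}

def Lplus : Set (ℝ × ℝ) := {z | z.2 = z.1}

def Lminus : Set (ℝ × ℝ) := {z | z.2 = -z.1}

/-- The closed square `Q = [-1,1]²`. -/
abbrev Qs : Set (ℝ × ℝ) := Set.Icc (-1, -1) (1, 1)

def LplusQ : Set ↥Qs := {q | (q : ℝ × ℝ).2 = (q : ℝ × ℝ).1}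

def LminusQ : Set ↥Qs := {q | (q : ℝ × ℝ).2 = -(q : ℝ × ℝ).1}


/-- The four corners of `Q = [-1,1]²`. -/
def cLL : ↥Qs := ⟨(-1, -1), by constructor <;> simp [Prod.le_def]⟩
def cLR : ↥Qs := ⟨(1, -1), by constructor <;> simp [Prod.le_def]⟩
def cUR : ↥Qs := ⟨(1, 1), by constructor <;> simp [Prod.le_def]⟩
def cUL : ↥Qs := ⟨(-1, 1), by constructor <;> simp [Prod.le_def]⟩

/-! Let `D` bound the distances of `X`. If `d_{W_p}(μ, ν) = D`, then `d(x, y) = D` for almost all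
`(x, y)` with respect to `μ ⊗ ν`; in particular the sphere of radius `D` around `δ_a` in `𝒲_p(X)`
is `𝒫(S)`, where `S` is the sphere of radius `D` around `a`. An isometry `Φ` of `𝒲_p(X)` respects
inclusions between these spheres. For `X = Q` and `D = 2` the maximal spheres are those around the
Dirac masses at the corners, so `Φ` permutes these four measures.

For opposite corners `u`, `v` the two spheres meet in the measures on the other two corners
`{w, w'}`, which are determined by their distance to `δ_w`. For adjacent corners they meet in a set
containing all measures on an edge, and the distance to the Dirac mass at an end point does not
determine such a measure. Hence `Φ` respects opposite corners, and a permutation of the corners that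
does so is induced by a sign change of the coordinates, possibly after exchanging them. -/

open scoped ENNReal

section WassersteinSpace

variable {X : Type*} [MeasurableSpace X] {p : ℝ}

/-- The set `𝒫(K)` of probability measures concentrated on `K`, regarded as measures on the
ambient space. -/
def probOn (K : Set X) : Set (Measure X) := {μ | IsProbabilityMeasure μ ∧ ∀ᵐ x ∂μ, x ∈ K}

lemma probOn_mono {K L : Set X} (h : K ⊆ L) : probOn K ⊆ probOn L :=
  fun _ hμ => ⟨hμ.1, hμ.2.mono h⟩

lemma probOn_inter (K L : Set X) : probOn (K ∩ L) = probOn K ∩ probOn L := by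
  ext μ
  simp only [probOn, Set.mem_inter_iff, Set.mem_ofPred_eq, Filter.eventually_and]
  tauto

lemma dirac_mem_probOn [MeasurableSingletonClass X] {K : Set X} {x : X} (hx : x ∈ K) :
    Measure.dirac x ∈ probOn K :=
  ⟨inferInstance, by rwa [ae_dirac_eq]⟩

lemma eq_dirac_of_mem_probOn_singleton {μ : Measure X} {c : X} (hμ : μ ∈ probOn {c}) :
    μ = Measure.dirac c := by
  obtain ⟨_, hc⟩ := hμ
  simpa using Measure.map_congr (f := id) (g := fun _ => c) hc

/-- The two-point probability measure `(1 - t) δ_w + t δ_w'`, meaningful for `t ≤ 1`. -/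
noncomputable def twoPoint (w w' : X) (t : ℝ≥0∞) : Measure X :=
  (1 - t) • Measure.dirac w + t • Measure.dirac w'

lemma twoPoint_mem_probOn [MeasurableSingletonClass X] {K : Set X} {w w' : X} {t : ℝ≥0∞}
    (ht : t ≤ 1) (hw : w ∈ K) (hw' : w' ∈ K) : twoPoint w w' t ∈ probOn K := by
  refine ⟨⟨by simp [twoPoint, tsub_add_cancel_of_le ht]⟩, ?_⟩
  exact ae_add_measure_iff.2 ⟨Measure.ae_smul_measure (dirac_mem_probOn hw).2 _,
    Measure.ae_smul_measure (dirac_mem_probOn hw').2 _⟩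

lemma eq_twoPoint_of_mem_probOn_pair [MeasurableSingletonClass X] {μ : Measure X} {w w' : X}
    (hne : w ≠ w') (hμ : μ ∈ probOn {w, w'}) : μ = twoPoint w w' (μ {w'}) := by
  obtain ⟨_, hae⟩ := hμ
  have hrep := (Measure.ae_eq_or_eq_iff_eq_dirac_add_dirac hne).1 hae
  have hsum : μ {w} + μ {w'} = 1 := by
    simpa using (congrArg (fun ν : Measure X => ν Set.univ) hrep).symm
  rwa [twoPoint, ← hsum, ENNReal.add_sub_cancel_right (measure_ne_top μ _)]

section Dirac

variable [MetricSpace X] [OpensMeasurableSpace X]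

lemma wdist_dirac_left (a : X) (ν : Measure X) [IsProbabilityMeasure ν] :
    Wdist p (Measure.dirac a) ν = ((∫⁻ y, edist a y ^ p ∂ν) ^ (1 / p)).toReal := by
  have hcost : ∀ π : Measure (X × X), π.map Prod.fst = Measure.dirac a ∧ π.map Prod.snd = ν →
      ∫⁻ q, edist q.1 q.2 ^ p ∂π = ∫⁻ y, edist a y ^ p ∂ν := by
    rintro π ⟨hfst, hsnd⟩
    have hae : ∀ᵐ q ∂π, q.1 = a := by
      refine ae_of_ae_map (p := (· = a)) measurable_fst.aemeasurable ?_
      rw [hfst, ae_dirac_eq]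
      rfl
    rw [← hsnd, lintegral_map (measurable_edist_right.pow_const p) measurable_snd]
    refine lintegral_congr_ae (hae.mono fun q hq => ?_)
    simp only [hq]
  have hprod : (Measure.dirac a).prod ν ∈ {π : Measure (X × X) |
      π.map Prod.fst = Measure.dirac a ∧ π.map Prod.snd = ν} := ⟨by simp, by simp⟩
  rw [Wdist, biInf_congr fun π hπ => by rw [hcost π hπ], biInf_const ⟨_, hprod⟩]

lemma wdist_dirac_twoPoint (hp : 0 < p) (w w' : X) {t : ℝ≥0∞} (ht : t ≤ 1) :
    Wdist p (Measure.dirac w) (twoPoint w w' t) = t.toReal ^ (1 / p) * dist w w' := by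
  have := (twoPoint_mem_probOn ht (Set.mem_univ w) (Set.mem_univ w')).1
  have hcost : ∫⁻ y, edist w y ^ p ∂twoPoint w w' t = t * edist w w' ^ p := by
    simp [twoPoint, hp]
  rw [wdist_dirac_left, hcost, ENNReal.mul_rpow_of_nonneg _ _ (by positivity), ← ENNReal.rpow_mul,
    mul_one_div_cancel hp.ne', ENNReal.rpow_one, ENNReal.toReal_mul, ENNReal.toReal_rpow,
    edist_dist, ENNReal.toReal_ofReal dist_nonneg]

lemma wdist_dirac_dirac (hp : 0 < p) (w w' : X) :
    Wdist p (Measure.dirac w) (Measure.dirac w') = dist w w' := by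
  simpa [twoPoint] using wdist_dirac_twoPoint hp w w' le_rfl

lemma injOn_wdist_dirac_probOn_pair (hp : 0 < p) {w w' : X} (hne : w ≠ w') :
    Set.InjOn (Wdist p (Measure.dirac w)) (probOn {w, w'}) := by
  intro μ hμ ν hν h
  have := hμ.1
  have := hν.1
  rw [eq_twoPoint_of_mem_probOn_pair hne hμ, eq_twoPoint_of_mem_probOn_pair hne hν] at h ⊢
  rw [wdist_dirac_twoPoint hp _ _ prob_le_one, wdist_dirac_twoPoint hp _ _ prob_le_one,
    mul_left_inj' (dist_ne_zero.2 hne),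
    Real.rpow_left_inj ENNReal.toReal_nonneg ENNReal.toReal_nonneg (by positivity),
    ENNReal.toReal_eq_toReal_iff' (measure_ne_top μ _) (measure_ne_top ν _)] at h
  rw [h]

/-- Compare `δ_y` with the two-point measure on `{w, w'}` at the same distance from `δ_w`. -/
lemma not_injOn_wdist_dirac_probOn (hp : 0 < p) {K : Set X} {w w' y : X} (hw : w ∈ K)
    (hw' : w' ∈ K) (hy : y ∈ K) (hwy : w ≠ y) (hlt : dist w y < dist w w') :
    ¬ Set.InjOn (Wdist p (Measure.dirac w)) (probOn K) := by
  intro hinj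
  have hpos : 0 < dist w y := dist_pos.2 hwy
  set r := (dist w y / dist w w') ^ p with hr
  have hr0 : 0 < r := Real.rpow_pos_of_pos (div_pos hpos (hpos.trans hlt)) p
  have hr1 : ENNReal.ofReal r ≤ 1 := ENNReal.ofReal_le_one.2 <|
    Real.rpow_le_one (by positivity) (div_le_one_of_le₀ hlt.le dist_nonneg) hp.le
  have hdist : Wdist p (Measure.dirac w) (twoPoint w w' (ENNReal.ofReal r)) =
      Wdist p (Measure.dirac w) (Measure.dirac y) := by
    rw [wdist_dirac_twoPoint hp _ _ hr1, wdist_dirac_dirac hp, ENNReal.toReal_ofReal hr0.le, hr,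
      ← Real.rpow_mul (by positivity), mul_one_div_cancel hp.ne', Real.rpow_one,
      div_mul_cancel₀ _ (hpos.trans hlt).ne']
  have heq := hinj (twoPoint_mem_probOn hr1 hw hw') (dirac_mem_probOn hy) hdist
  have hyw' : y ≠ w' := fun h => hlt.ne (h ▸ rfl)
  have hmass : ENNReal.ofReal r ≤ twoPoint w w' (ENNReal.ofReal r) {w'} := by simp [twoPoint]
  rw [heq] at hmass
  simp [hyw', hr0.not_ge] at hmass

end Dirac

section WassersteinSphere

variable [PseudoMetricSpace X] {D : ℝ}

/-- The sphere of radius `D` around `μ` in `𝒲_p(X)`. For `D` a bound on the distances of `X`, the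
order by inclusion on these spheres is what an isometry of `𝒲_p(X)` is made to preserve. -/
def wSphere (p : ℝ) (μ : Measure X) (D : ℝ) : Set (Measure X) := {ν ∈ WSet X p | Wdist p μ ν = D}

lemma mem_wSet_of_dist_le (hp : 0 ≤ p) (hD : ∀ x y : X, dist x y ≤ D) (μ : Measure X)
    [IsProbabilityMeasure μ] : μ ∈ WSet X p := by
  obtain ⟨x₀⟩ := nonempty_of_isProbabilityMeasure μ
  refine ⟨inferInstance, x₀, (lintegral_le_const (c := ENNReal.ofReal D ^ p) ?_).trans_lt
    (ENNReal.rpow_lt_top_of_nonneg hp ENNReal.ofReal_ne_top)⟩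
  refine .of_forall fun x => ENNReal.rpow_le_rpow ?_ hp
  exact edist_dist x x₀ ▸ ENNReal.ofReal_le_ofReal (hD x x₀)

/-- The product coupling already has cost at most `D ^ p`, so its cost is `D` almost everywhere. -/
lemma ae_ae_mem_sphere_of_wdist_eq (hp : 0 < p) (hD : ∀ x y : X, dist x y ≤ D) {μ ν : Measure X}
    [IsProbabilityMeasure μ] [IsProbabilityMeasure ν] (h : Wdist p μ ν = D) :
    ∀ᵐ x ∂μ, ∀ᵐ y ∂ν, y ∈ Metric.sphere x D := by
  have hle : ∀ q : X × X, edist q.1 q.2 ^ p ≤ ENNReal.ofReal D ^ p := fun q =>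
    ENNReal.rpow_le_rpow (edist_dist q.1 q.2 ▸ ENNReal.ofReal_le_ofReal (hD _ _)) hp.le
  have hcost : ENNReal.ofReal D ^ p ≤ ∫⁻ q, edist q.1 q.2 ^ p ∂μ.prod ν := by
    rw [← ENNReal.le_rpow_inv_iff hp, ← one_div, ← h]
    exact ENNReal.ofReal_toReal_le.trans (iInf₂_le (μ.prod ν) ⟨by simp, by simp⟩)
  have hae : (fun q : X × X => edist q.1 q.2 ^ p) =ᵐ[μ.prod ν] fun _ => ENNReal.ofReal D ^ p := by
    refine ae_eq_of_ae_le_of_lintegral_le (.of_forall hle) ?_ (by fun_prop) (by simpa using hcost)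
    exact ((lintegral_le_const (.of_forall hle)).trans_lt
      (ENNReal.rpow_lt_top_of_nonneg hp.le ENNReal.ofReal_ne_top)).ne
  refine Measure.ae_ae_of_ae_prod (p := fun q => q.2 ∈ Metric.sphere q.1 D)
    (hae.mono fun q hq => ?_)
  have hedist := ENNReal.rpow_left_injective hp.ne' hq
  rw [edist_dist, ENNReal.ofReal_eq_ofReal_iff dist_nonneg (dist_nonneg.trans (hD q.1 q.2))]
    at hedist
  rwa [Metric.mem_sphere']

end WassersteinSphere

section WassersteinSphereDirac

variable [MetricSpace X] [OpensMeasurableSpace X] {D : ℝ}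

lemma wSphere_dirac (hp : 0 < p) (hD : ∀ x y : X, dist x y ≤ D) (a : X) :
    wSphere p (Measure.dirac a) D = probOn (Metric.sphere a D) := by
  ext ν
  constructor
  · rintro ⟨⟨_, -⟩, h⟩
    refine ⟨inferInstance, ?_⟩
    simpa only [ae_dirac_eq, Filter.eventually_pure] using ae_ae_mem_sphere_of_wdist_eq hp hD h
  · rintro ⟨_, hae⟩
    refine ⟨mem_wSet_of_dist_le hp.le hD ν, ?_⟩
    have hcost : ∀ᵐ y ∂ν, edist a y ^ p = ENNReal.ofReal D ^ p := hae.mono fun y hy => by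
      rw [edist_dist, Metric.mem_sphere'.1 hy]
    obtain ⟨y⟩ := nonempty_of_isProbabilityMeasure ν
    rw [wdist_dirac_left, lintegral_eq_const hcost, ← ENNReal.rpow_mul, mul_one_div_cancel hp.ne',
      ENNReal.rpow_one, ENNReal.toReal_ofReal (dist_nonneg.trans (hD a y))]

lemma exists_wSphere_subset_wSphere_dirac (hp : 0 < p) (hD : ∀ x y : X, dist x y ≤ D)
    {ι : Type*} [Countable ι] {c : ι → X}
    (hc : ∀ x, ∃ i, Metric.sphere x D ⊆ Metric.sphere (c i) D) (μ : Measure X)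
    [IsProbabilityMeasure μ] : ∃ i, wSphere p μ D ⊆ wSphere p (Measure.dirac (c i)) D := by
  obtain ⟨i, hi⟩ : ∃ i, ∃ᵐ x ∂μ, Metric.sphere x D ⊆ Metric.sphere (c i) D := by
    by_contra! hnot
    obtain ⟨x, hx⟩ := (ae_all_iff.2 hnot).exists
    obtain ⟨i, hi⟩ := hc x
    exact hx i hi
  refine ⟨i, fun ν hν => ?_⟩
  have := hν.1.1
  obtain ⟨x, hxc, hx⟩ := (hi.and_eventually (ae_ae_mem_sphere_of_wdist_eq hp hD hν.2)).exists
  rw [wSphere_dirac hp hD]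
  exact ⟨inferInstance, hx.mono hxc⟩

/-- By separability, almost every point `x` of `μ` has `sphere c D ⊆ sphere x D`. -/
lemma eq_dirac_of_wSphere_dirac_subset [SecondCountableTopology X] (hp : 0 < p)
    (hD : ∀ x y : X, dist x y ≤ D) {c : X}
    (hc : ∀ x, Metric.sphere c D ⊆ Metric.sphere x D → x = c) {μ : Measure X}
    [IsProbabilityMeasure μ] (h : wSphere p (Measure.dirac c) D ⊆ wSphere p μ D) :
    μ = Measure.dirac c := by
  obtain ⟨t, htc, ht, hdense⟩ := (TopologicalSpace.IsSeparable.of_separableSpace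
    (Metric.sphere c D)).exists_countable_dense_subset
  have hae : ∀ y ∈ t, ∀ᵐ x ∂μ, y ∈ Metric.sphere x D := fun y hy => by
    have hy' : Measure.dirac y ∈ wSphere p μ D :=
      h (wSphere_dirac hp hD c ▸ dirac_mem_probOn (htc hy))
    simpa only [ae_dirac_eq, Filter.eventually_pure] using ae_ae_mem_sphere_of_wdist_eq hp hD hy'.2
  refine eq_dirac_of_mem_probOn_singleton ⟨inferInstance, ?_⟩
  filter_upwards [(ae_ball_iff ht).2 hae] with x hx
  exact hc x (hdense.trans (closure_minimal hx Metric.isClosed_sphere))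

end WassersteinSphereDirac

namespace IsWIsometry

variable [PseudoMetricSpace X] {Φ : Measure X → Measure X} {D : ℝ}

lemma map_mem_wSphere_iff (hΦ : IsWIsometry X p Φ) {μ ν : Measure X} (hμ : μ ∈ WSet X p)
    (hν : ν ∈ WSet X p) : Φ ν ∈ wSphere p (Φ μ) D ↔ ν ∈ wSphere p μ D := by
  simp only [wSphere, Set.mem_sep_iff, hΦ.1.mapsTo hν, hν, hΦ.2 μ hμ ν hν]

lemma injOn_wdist_of_map (hΦ : IsWIsometry X p Φ) {μ₁ μ₂ μ : Measure X} (hμ₁ : μ₁ ∈ WSet X p)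
    (hμ₂ : μ₂ ∈ WSet X p) (hμ : μ ∈ WSet X p)
    (h : Set.InjOn (Wdist p (Φ μ)) (wSphere p (Φ μ₁) D ∩ wSphere p (Φ μ₂) D)) :
    Set.InjOn (Wdist p μ) (wSphere p μ₁ D ∩ wSphere p μ₂ D) := by
  rintro ν ⟨h₁, h₂⟩ ν' ⟨h₁', h₂'⟩ heq
  refine hΦ.1.injOn h₁.1 h₁'.1 (h ?_ ?_ ?_)
  · exact ⟨(hΦ.map_mem_wSphere_iff hμ₁ h₁.1).2 h₁, (hΦ.map_mem_wSphere_iff hμ₂ h₁.1).2 h₂⟩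
  · exact ⟨(hΦ.map_mem_wSphere_iff hμ₁ h₁'.1).2 h₁', (hΦ.map_mem_wSphere_iff hμ₂ h₁'.1).2 h₂'⟩
  · rw [hΦ.2 μ hμ ν h₁.1, hΦ.2 μ hμ ν' h₁'.1, heq]

lemma exists_map_dirac_eq_dirac {X : Type*} [MeasurableSpace X] [MetricSpace X]
    [OpensMeasurableSpace X] [SecondCountableTopology X] {Φ : Measure X → Measure X}
    (hΦ : IsWIsometry X p Φ) (hp : 0 < p)
    (hD : ∀ x y : X, dist x y ≤ D) {ι : Type*} [Countable ι] {c : ι → X}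
    (hc : ∀ x, ∃ i, Metric.sphere x D ⊆ Metric.sphere (c i) D) {x : X}
    (hx : ∀ z, Metric.sphere x D ⊆ Metric.sphere z D → z = x) :
    ∃ i, Φ (Measure.dirac (c i)) = Measure.dirac x := by
  obtain ⟨μ, hμ, hμx⟩ := hΦ.1.surjOn (mem_wSet_of_dist_le hp.le hD (Measure.dirac x))
  have := hμ.1
  obtain ⟨i, hi⟩ := exists_wSphere_subset_wSphere_dirac hp hD hc μ
  have hci := mem_wSet_of_dist_le hp.le hD (Measure.dirac (c i))
  have := (hΦ.1.mapsTo hci).1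
  refine ⟨i, eq_dirac_of_wSphere_dirac_subset hp hD hx fun ν hν => ?_⟩
  obtain ⟨ν, hν', rfl⟩ := hΦ.1.surjOn hν.1
  rw [hΦ.map_mem_wSphere_iff hci hν']
  rw [← hμx, hΦ.map_mem_wSphere_iff hμ hν'] at hν
  exact hi hν

end IsWIsometry

end WassersteinSpace

section Square

open Metric

lemma unit_intCast_injective : Function.Injective fun s : ℤˣ => ((s : ℤ) : ℝ) :=
  Int.cast_injective.comp Units.val_injective

lemma unit_intCast_ne_neg (s : ℤˣ) : ((s : ℤ) : ℝ) ≠ -(s : ℤ) :=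
  self_ne_neg.2 (Int.cast_ne_zero.2 s.ne_zero)

lemma abs_sub_unit_eq_two_iff {b : ℝ} (hb : |b| ≤ 1) (s : ℤˣ) :
    |b - (s : ℤ)| = 2 ↔ b = -(s : ℤ) := by
  rw [abs_le] at hb
  rcases Int.units_eq_one_or s with rfl | rfl <;> push_cast <;> grind

lemma exists_unit_forall_abs_sub_eq_two {a : ℝ} (ha : |a| ≤ 1) :
    ∃ s : ℤˣ, ∀ b : ℝ, |b| ≤ 1 → |b - a| = 2 → b = -(s : ℤ) := by
  rcases lt_or_ge a 0 with h | h
  · exact ⟨-1, by push_cast; grind⟩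
  · exact ⟨1, by push_cast; grind⟩

lemma mem_Qs_iff {z : ℝ × ℝ} : z ∈ Qs ↔ |z.1| ≤ 1 ∧ |z.2| ≤ 1 := by
  simp only [Set.mem_Icc, Prod.le_def, abs_le]
  tauto

/-- The corner of `Q` with sign vector `ε`. In the group of sign vectors, opposite corners are
`ε` and `-ε`. -/
def corner (ε : ℤˣ × ℤˣ) : ↥Qs :=
  ⟨((ε.1 : ℤ), (ε.2 : ℤ)), mem_Qs_iff.2 ⟨(abs_unit_intCast _).le, (abs_unit_intCast _).le⟩⟩

lemma corner_injective : Function.Injective corner := fun _ _ h =>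
  have h' := Prod.ext_iff.1 (Subtype.ext_iff.1 h)
  Prod.ext (unit_intCast_injective h'.1) (unit_intCast_injective h'.2)

lemma exists_corner_eq {x : ↥Qs} (hx : x = cLL ∨ x = cLR ∨ x = cUR ∨ x = cUL) :
    ∃ ε, corner ε = x := by
  rcases hx with rfl | rfl | rfl | rfl
  exacts [⟨(-1, -1), by simp [corner, cLL]⟩, ⟨(1, -1), by simp [corner, cLR]⟩,
    ⟨(1, 1), by simp [corner, cUR]⟩, ⟨(-1, 1), by simp [corner, cUL]⟩]

lemma abs_sub_le_two {a b : ℝ} (ha : |a| ≤ 1) (hb : |b| ≤ 1) : |a - b| ≤ 2 :=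
  (abs_sub a b).trans (by linarith)

lemma Qs.dist_le_two (x y : ↥Qs) : dist x y ≤ 2 :=
  have hx := mem_Qs_iff.1 x.2
  have hy := mem_Qs_iff.1 y.2
  sup_le (abs_sub_le_two hx.1 hy.1) (abs_sub_le_two hx.2 hy.2)

lemma Qs.dist_eq_two_iff (x y : ↥Qs) :
    dist x y = 2 ↔ |(x : ℝ × ℝ).1 - (y : ℝ × ℝ).1| = 2 ∨ |(x : ℝ × ℝ).2 - (y : ℝ × ℝ).2| = 2 := by
  have hx := mem_Qs_iff.1 x.2
  have hy := mem_Qs_iff.1 y.2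
  have h₁ := abs_sub_le_two hx.1 hy.1
  have h₂ := abs_sub_le_two hx.2 hy.2
  rw [Subtype.dist_eq, Prod.dist_eq, Real.dist_eq, Real.dist_eq]
  grind

lemma mem_sphere_corner_iff {y : ↥Qs} {ε : ℤˣ × ℤˣ} :
    y ∈ sphere (corner ε) 2 ↔ (y : ℝ × ℝ).1 = -(ε.1 : ℤ) ∨ (y : ℝ × ℝ).2 = -(ε.2 : ℤ) := by
  have hy := mem_Qs_iff.1 y.2
  rw [mem_sphere, Qs.dist_eq_two_iff]
  exact or_congr (abs_sub_unit_eq_two_iff hy.1 ε.1) (abs_sub_unit_eq_two_iff hy.2 ε.2)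

lemma exists_sphere_subset_sphere_corner (x : ↥Qs) :
    ∃ ε, sphere x 2 ⊆ sphere (corner ε) 2 := by
  have hx := mem_Qs_iff.1 x.2
  obtain ⟨s, hs⟩ := exists_unit_forall_abs_sub_eq_two hx.1
  obtain ⟨t, ht⟩ := exists_unit_forall_abs_sub_eq_two hx.2
  refine ⟨(s, t), fun y hy => mem_sphere_corner_iff.2 ?_⟩
  have hyQ := mem_Qs_iff.1 y.2
  exact ((Qs.dist_eq_two_iff y x).1 hy).imp (hs _ hyQ.1) (ht _ hyQ.2)

lemma corner_mem_sphere_corner_iff {δ ε : ℤˣ × ℤˣ} :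
    corner δ ∈ sphere (corner ε) 2 ↔ δ.1 = -ε.1 ∨ δ.2 = -ε.2 := by
  rw [mem_sphere_corner_iff]
  simp only [corner]
  norm_cast

lemma eq_corner_of_sphere_subset {ε : ℤˣ × ℤˣ} {z : ↥Qs}
    (h : sphere (corner ε) 2 ⊆ sphere z 2) : z = corner ε := by
  have hz : ∀ δ : ℤˣ × ℤˣ, δ.1 = -ε.1 ∨ δ.2 = -ε.2 →
      (z : ℝ × ℝ).1 = -(δ.1 : ℤ) ∨ (z : ℝ × ℝ).2 = -(δ.2 : ℤ) := fun δ hδ =>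
    mem_sphere_corner_iff.1 (mem_sphere_comm.1 (h (corner_mem_sphere_corner_iff.2 hδ)))
  have h₁ : (z : ℝ × ℝ).1 = (ε.1 : ℤ) ∨ (z : ℝ × ℝ).2 = (ε.2 : ℤ) := by
    simpa using hz (-ε) (by simp)
  have h₂ : (z : ℝ × ℝ).1 = -(ε.1 : ℤ) ∨ (z : ℝ × ℝ).2 = (ε.2 : ℤ) := by
    simpa using hz (ε.1, -ε.2) (by simp)
  have h₃ : (z : ℝ × ℝ).1 = (ε.1 : ℤ) ∨ (z : ℝ × ℝ).2 = -(ε.2 : ℤ) := by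
    simpa using hz (-ε.1, ε.2) (by simp)
  refine Subtype.ext (Prod.ext ?_ ?_)
  · exact h₁.elim id fun h => h₃.resolve_right (h ▸ unit_intCast_ne_neg ε.2)
  · exact h₁.elim (fun h => h₂.resolve_left (h ▸ unit_intCast_ne_neg ε.1)) id

section OppositeCorners

variable {p : ℝ} {u v w : ℤˣ × ℤˣ}

lemma injOn_wdist_inter_wSphere_of_opposite (hp : 0 < p) (ε : ℤˣ × ℤˣ) :
    Set.InjOn (Wdist p (Measure.dirac (corner (ε.1, -ε.2))))
      (wSphere p (Measure.dirac (corner ε)) 2 ∩ wSphere p (Measure.dirac (corner (-ε))) 2) := by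
  have hne : corner (ε.1, -ε.2) ≠ corner (-ε.1, ε.2) :=
    corner_injective.ne fun h => units_ne_neg_self ε.1 (congrArg Prod.fst h)
  rw [wSphere_dirac hp Qs.dist_le_two, wSphere_dirac hp Qs.dist_le_two, ← probOn_inter]
  refine (injOn_wdist_dirac_probOn_pair hp hne).mono (probOn_mono ?_)
  rintro y ⟨hy, hy'⟩
  have h := mem_sphere_corner_iff.1 hy
  have h' : (y : ℝ × ℝ).1 = (ε.1 : ℤ) ∨ (y : ℝ × ℝ).2 = (ε.2 : ℤ) := by
    simpa using mem_sphere_corner_iff.1 hy'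
  simp only [Set.mem_insert_iff, Set.mem_singleton_iff, Subtype.ext_iff, Prod.ext_iff, corner,
    Units.val_neg, Int.cast_neg]
  have hε₁ := unit_intCast_ne_neg ε.1
  have hε₂ := unit_intCast_ne_neg ε.2
  grind

lemma not_injOn_wdist_inter_wSphere_of_adjacent (hp : 0 < p) (hvu : v ≠ u) (hvu' : v ≠ -u) :
    ¬ Set.InjOn (Wdist p (Measure.dirac (corner (-u))))
      (wSphere p (Measure.dirac (corner u)) 2 ∩ wSphere p (Measure.dirac (corner v)) 2) := by
  have hadj : u.1 = v.1 ∨ u.2 = v.2 := by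
    revert u v
    decide
  have hne : corner (-u) ≠ corner (-v) := corner_injective.ne (neg_injective.ne hvu.symm)
  let y : ↥Qs := ⟨midpoint ℝ (corner (-u)) (corner (-v)),
    (convex_Icc _ _).midpoint_mem (corner (-u)).2 (corner (-v)).2⟩
  have hy : dist (corner (-u)) y = 2⁻¹ * dist (corner (-u)) (corner (-v)) := by
    simp [Subtype.dist_eq, y]
  have hpos : 0 < dist (corner (-u)) (corner (-v)) := dist_pos.2 hne
  rw [wSphere_dirac hp Qs.dist_le_two, wSphere_dirac hp Qs.dist_le_two, ← probOn_inter]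
  refine not_injOn_wdist_dirac_probOn hp (w' := corner (-v)) (y := y) ?_ ?_ ?_
    (dist_pos.1 (by rw [hy]; positivity)) (by rw [hy]; linarith)
  · exact ⟨corner_mem_sphere_corner_iff.2 (.inl rfl),
      corner_mem_sphere_corner_iff.2 (by simpa using hadj)⟩
  · exact ⟨corner_mem_sphere_corner_iff.2 (by simpa [eq_comm] using hadj),
      corner_mem_sphere_corner_iff.2 (.inl rfl)⟩
  · rw [Set.mem_inter_iff, mem_sphere_corner_iff, mem_sphere_corner_iff]
    simp only [y, midpoint_eq_smul_add, invOf_eq_inv, corner, Prod.fst_neg, Units.val_neg,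
      Int.cast_neg, Prod.snd_neg, Prod.mk_add_mk, Prod.smul_mk, smul_eq_mul]
    grind

lemma eq_neg_of_injOn_wdist_inter_wSphere (hp : 0 < p) (hvu : v ≠ u) (hwu : w ≠ u) (hwv : w ≠ v)
    (h : Set.InjOn (Wdist p (Measure.dirac (corner w)))
      (wSphere p (Measure.dirac (corner u)) 2 ∩ wSphere p (Measure.dirac (corner v)) 2)) :
    v = -u := by
  by_contra hvu'
  have hw : ∀ u v w : ℤˣ × ℤˣ, v ≠ u ∧ v ≠ -u ∧ w ≠ u ∧ w ≠ v → w = -u ∨ w = -v := by decide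
  rcases hw u v w ⟨hvu, hvu', hwu, hwv⟩ with rfl | rfl
  · exact not_injOn_wdist_inter_wSphere_of_adjacent hp hvu hvu' h
  · rw [Set.inter_comm] at h
    exact not_injOn_wdist_inter_wSphere_of_adjacent hp hvu.symm
      (fun huv => hvu' (neg_eq_iff_eq_neg.1 huv.symm)) h

end OppositeCorners

lemma IsIsom.comp {X : Type*} [PseudoMetricSpace X] {S T : X → X} (hS : IsIsom S)
    (hT : IsIsom T) : IsIsom (S ∘ T) :=
  ⟨hS.1.comp hT.1, fun x y => (hS.2 _ _).trans (hT.2 x y)⟩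

lemma IsIsom.measurable {X : Type*} [PseudoMetricSpace X] [MeasurableSpace X] [BorelSpace X]
    {T : X → X} (hT : IsIsom T) : Measurable T :=
  (Isometry.of_dist_eq hT.2).continuous.measurable

/-- The isometry `(x₁, x₂) ↦ (ε₁ x₁, ε₂ x₂)` of `Q`. -/
def signChange (ε : ℤˣ × ℤˣ) (x : ↥Qs) : ↥Qs :=
  ⟨((ε.1 : ℤ) * (x : ℝ × ℝ).1, (ε.2 : ℤ) * (x : ℝ × ℝ).2), by
    simpa only [mem_Qs_iff, abs_mul, abs_unit_intCast, one_mul] using mem_Qs_iff.1 x.2⟩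

/-- The isometry `(x₁, x₂) ↦ (x₂, x₁)` of `Q`. -/
def coordSwap (x : ↥Qs) : ↥Qs := ⟨(x : ℝ × ℝ).swap, mem_Qs_iff.2 (mem_Qs_iff.1 x.2).symm⟩

lemma isIsom_signChange (ε : ℤˣ × ℤˣ) : IsIsom (signChange ε) := by
  have hmul : ∀ (s : ℤˣ) (a : ℝ), (s : ℤ) * ((s : ℤ) * a) = a := fun s a => by
    rw [← mul_assoc, ← Int.cast_mul, ← Units.val_mul, Int.units_mul_self, Units.val_one,
      Int.cast_one, one_mul]
  have hdist : ∀ (s : ℤˣ) (a b : ℝ), dist ((s : ℤ) * a) ((s : ℤ) * b) = dist a b := fun s a b => by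
    rw [Real.dist_eq, ← mul_sub, abs_mul, abs_unit_intCast, one_mul, Real.dist_eq]
  refine ⟨Function.Involutive.bijective fun x => ?_, fun x y => ?_⟩
  · exact Subtype.ext (Prod.ext (hmul _ _) (hmul _ _))
  · exact congrArg₂ max (hdist _ _ _) (hdist _ _ _)

lemma isIsom_coordSwap : IsIsom coordSwap :=
  ⟨Function.Involutive.bijective fun _ => rfl, fun _ _ => max_comm _ _⟩

lemma signChange_corner (δ ε : ℤˣ × ℤˣ) : signChange δ (corner ε) = corner (δ * ε) := by
  simp [signChange, corner]

lemma coordSwap_corner (ε : ℤˣ × ℤˣ) : coordSwap (corner ε) = corner ε.swap := rfl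

lemma eq_of_odd {f g : ℤˣ × ℤˣ → ℤˣ × ℤˣ} (hf : f.Odd) (hg : g.Odd) (h : f 1 = g 1)
    (h' : f (1, -1) = g (1, -1)) : f = g := by
  have hsigns : ∀ ε : ℤˣ × ℤˣ, ε = 1 ∨ ε = -1 ∨ ε = (1, -1) ∨ ε = -(1, -1) := by decide
  ext1 ε
  rcases hsigns ε with rfl | rfl | rfl | rfl
  · exact h
  · rw [hf, hg, h]
  · exact h'
  · rw [hf, hg, h']

lemma eq_mul_or_eq_mul_swap_of_odd {σ : ℤˣ × ℤˣ → ℤˣ × ℤˣ} (hσ : Function.Injective σ)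
    (hodd : σ.Odd) : (σ = fun ε => σ 1 * ε) ∨ σ = fun ε => σ 1 * ε.swap := by
  have hadj : ∀ u v : ℤˣ × ℤˣ, v ≠ u → v ≠ -u → v = u * (1, -1) ∨ v = u * (-1, 1) := by decide
  have hne : σ (1, -1) ≠ σ 1 := hσ.ne (by decide)
  have hne' : σ (1, -1) ≠ -σ 1 := hodd 1 ▸ hσ.ne (by decide)
  refine (hadj _ _ hne hne').imp (eq_of_odd hodd ?_ ?_) (eq_of_odd hodd ?_ ?_)
  · exact fun ε => Prod.ext (mul_neg _ _) (mul_neg _ _)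
  · exact (mul_one _).symm
  · exact fun ε => Prod.ext (mul_neg _ _) (mul_neg _ _)
  · exact (mul_one _).symm

lemma exists_isIsom_corner_eq {σ : ℤˣ × ℤˣ → ℤˣ × ℤˣ} (hσ : Function.Injective σ)
    (hodd : σ.Odd) : ∃ Ψ, IsIsom Ψ ∧ ∀ ε, Ψ (corner ε) = corner (σ ε) := by
  rcases eq_mul_or_eq_mul_swap_of_odd hσ hodd with h | h
  · exact ⟨signChange (σ 1), isIsom_signChange _, fun ε => by
      rw [signChange_corner, congrFun h ε]⟩
  · exact ⟨signChange (σ 1) ∘ coordSwap, (isIsom_signChange _).comp isIsom_coordSwap, fun ε => by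
      rw [Function.comp_apply, coordSwap_corner, signChange_corner, congrFun h ε]⟩

section CornerPermutation

variable {p : ℝ} {Φ : Measure ↥Qs → Measure ↥Qs} {σ : ℤˣ × ℤˣ → ℤˣ × ℤˣ}

lemma IsWIsometry.exists_map_dirac_corner (hΦ : IsWIsometry ↥Qs p Φ) (hp : 0 < p) :
    ∃ σ : ℤˣ × ℤˣ → ℤˣ × ℤˣ, ∀ ε, Φ (Measure.dirac (corner (σ ε))) = Measure.dirac (corner ε) :=
  Classical.skolem.1 fun _ => hΦ.exists_map_dirac_eq_dirac hp Qs.dist_le_two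
    exists_sphere_subset_sphere_corner fun _ => eq_corner_of_sphere_subset

lemma injective_of_map_dirac_corner
    (hσ : ∀ ε, Φ (Measure.dirac (corner (σ ε))) = Measure.dirac (corner ε)) :
    Function.Injective σ := fun ε δ h =>
  corner_injective (dirac_eq_dirac_iff.1 (by rw [← hσ ε, ← hσ δ, h]))

lemma IsWIsometry.odd_of_map_dirac_corner (hΦ : IsWIsometry ↥Qs p Φ) (hp : 0 < p)
    (hσ : ∀ ε, Φ (Measure.dirac (corner (σ ε))) = Measure.dirac (corner ε)) : σ.Odd := by
  intro ε
  have hinj := injective_of_map_dirac_corner hσ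
  have hmem : ∀ δ, Measure.dirac (corner δ) ∈ WSet ↥Qs p := fun δ =>
    mem_wSet_of_dist_le hp.le Qs.dist_le_two _
  have hne : ∀ ε : ℤˣ × ℤˣ, -ε ≠ ε ∧ (ε.1, -ε.2) ≠ ε ∧ (ε.1, -ε.2) ≠ -ε := by decide
  obtain ⟨hε, hη, hη'⟩ := hne ε
  refine eq_neg_of_injOn_wdist_inter_wSphere hp (hinj.ne hε) (hinj.ne hη) (hinj.ne hη')
    (hΦ.injOn_wdist_of_map (hmem _) (hmem _) (hmem _) ?_)
  rw [hσ, hσ, hσ]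
  exact injOn_wdist_inter_wSphere_of_opposite hp ε

end CornerPermutation

end Square

theorem corners_can_be_fixed_general (p : ℝ) (hp : 0 < p)
    (Φ : Measure ↥Qs → Measure ↥Qs) (hΦ : IsWIsometry ↥Qs p Φ) :
    ∃ Ψ : ↥Qs → ↥Qs, IsIsom Ψ ∧
      ∀ x : ↥Qs, (x = cLL ∨ x = cLR ∨ x = cUR ∨ x = cUL) →
        Φ ((Measure.dirac x).map Ψ) = Measure.dirac x := by
  obtain ⟨σ, hσ⟩ := hΦ.exists_map_dirac_corner hp
  obtain ⟨Ψ, hΨ, hΨσ⟩ := exists_isIsom_corner_eq (injective_of_map_dirac_corner hσ)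
    (hΦ.odd_of_map_dirac_corner hp hσ)
  refine ⟨Ψ, hΨ, fun x hx => ?_⟩
  obtain ⟨ε, rfl⟩ := exists_corner_eq hx
  rw [Measure.map_dirac' hΨ.measurable, hΨσ, hσ]

/-- For every isometry `Φ` of `𝒲_p(Q, d_m)` there is an isometry `Ψ` of `(Q, d_m)` such
that `Φ ∘ Ψ_#` fixes the Dirac masses at the four corners of `Q`. -/
theorem corners_can_be_fixed (p : ℝ) (hp : 1 ≤ p)
    (Φ : Measure ↥Qs → Measure ↥Qs) (hΦ : IsWIsometry ↥Qs p Φ) :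
    ∃ Ψ : ↥Qs → ↥Qs, IsIsom Ψ ∧
      ∀ x : ↥Qs, (x = cLL ∨ x = cLR ∨ x = cUR ∨ x = cUL) →
        Φ ((Measure.dirac x).map Ψ) = Measure.dirac x :=
  corners_can_be_fixed_general p (zero_lt_one.trans_le hp) Φ hΦ
end

section
/- Let μ ∈ 𝒲_1(Q), where Q = [−1,1]² with the maximum metric. Then d_{W_1}(δ_{(−1,−1)}, μ) + d_{W_1}(μ, δ_{(1,1)}) ≥ 2, with equality if and only if supp(μ) ⊆ L₊ = {(t,t) : t ∈ [−1,1]}. -/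
open MeasureTheory

/-!
A Dirac measure has only one coupling with any probability measure, so
`W₁(δ_a, μ) + W₁(μ, δ_b) = ∫ (d(a, x) + d(x, b)) dμ(x)`. The triangle inequality bounds the
integrand below by the constant `d(a, b)`, so the sum is at least `d(a, b)`, with equality exactly
when almost every `x` is metrically between `a` and `b`. In the maximum metric, the points between
two opposite corners of the square are those of the diagonal joining them.
-/

section Couplings

variable {X Y : Type*} [MeasurableSpace X] [MeasurableSpace Y]

theorem eq_dirac_prod_map_snd {π : Measure (X × Y)} {a : X}
    (h : π.map Prod.fst = Measure.dirac a) :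
    π = (Measure.dirac a).prod (π.map Prod.snd) := by
  have : IsProbabilityMeasure (π.map Prod.fst) := h ▸ inferInstance
  have : IsProbabilityMeasure π := Measure.isProbabilityMeasure_of_map Prod.fst
  have : IsProbabilityMeasure (π.map Prod.snd) :=
    Measure.isProbabilityMeasure_map measurable_snd.aemeasurable
  refine (Measure.prod_eq fun s t hs ht => ?_).symm
  have hmem : ∀ᵐ q ∂π, q.1 ∈ s ↔ a ∈ s := by
    refine ae_of_ae_map (p := fun x => x ∈ s ↔ a ∈ s) measurable_fst.aemeasurable ?_
    rw [h]
    exact (ae_dirac_iff (p := fun x => x ∈ s ↔ a ∈ s) (hs.iff (.const _))).mpr Iff.rfl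
  have hrect : π (s ×ˢ t) = π {q | a ∈ s ∧ q.2 ∈ t} :=
    measure_congr (by filter_upwards [hmem] with q hq using propext (and_congr_left' hq))
  rw [hrect, Measure.dirac_apply' a hs, Measure.map_apply measurable_snd ht]
  by_cases ha : a ∈ s <;> simp [ha, Set.preimage]

theorem couplings_dirac_left (a : X) (μ : Measure Y) [IsProbabilityMeasure μ] :
    {π : Measure (X × Y) | π.map Prod.fst = Measure.dirac a ∧ π.map Prod.snd = μ} =
      {(Measure.dirac a).prod μ} := by
  ext π
  constructor
  · rintro ⟨hfst, rfl⟩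
    exact eq_dirac_prod_map_snd hfst
  · rintro rfl
    constructor <;> simp

end Couplings

section Wasserstein

variable {X : Type*} [MeasurableSpace X] [PseudoMetricSpace X]

theorem Wdist_comm (p : ℝ) (μ ν : Measure X) : Wdist p μ ν = Wdist p ν μ := by
  suffices swap_le : ∀ μ ν : Measure X,
      ⨅ π ∈ {π : Measure (X × X) | π.map Prod.fst = μ ∧ π.map Prod.snd = ν},
        (∫⁻ q, edist q.1 q.2 ^ p ∂π) ^ (1 / p) ≤
      ⨅ π ∈ {π : Measure (X × X) | π.map Prod.fst = ν ∧ π.map Prod.snd = μ},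
        (∫⁻ q, edist q.1 q.2 ^ p ∂π) ^ (1 / p) from
    congrArg ENNReal.toReal ((swap_le μ ν).antisymm (swap_le ν μ))
  intro μ ν
  refine le_iInf₂ fun π ⟨hfst, hsnd⟩ => ?_
  have hcost : ∫⁻ q, edist q.1 q.2 ^ p ∂π.map Prod.swap = ∫⁻ q, edist q.1 q.2 ^ p ∂π :=
    (lintegral_map_equiv _ MeasurableEquiv.prodComm).trans
      (lintegral_congr fun q => by rw [edist_comm]; rfl)
  rw [← hcost]
  refine iInf₂_le (π.map Prod.swap) ⟨?_, ?_⟩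
  · rwa [Measure.map_map measurable_fst measurable_swap]
  · rwa [Measure.map_map measurable_snd measurable_swap]

variable [OpensMeasurableSpace X] [SecondCountableTopology X]

theorem Wdist_dirac_left (p : ℝ) (a : X) (μ : Measure X) [IsProbabilityMeasure μ] :
    Wdist p (Measure.dirac a) μ = ((∫⁻ x, edist a x ^ p ∂μ) ^ (1 / p)).toReal := by
  rw [Wdist, couplings_dirac_left, iInf_singleton, Measure.dirac_prod,
    lintegral_map (by fun_prop) (by fun_prop)]

theorem Wdist_one_dirac_left (a : X) (μ : Measure X) [IsProbabilityMeasure μ] :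
    Wdist 1 (Measure.dirac a) μ = ∫ x, dist a x ∂μ := by
  simp only [Wdist_dirac_left, ENNReal.rpow_one, div_one, dist_edist]
  exact (integral_toReal (by fun_prop) (by simp [edist_lt_top])).symm

theorem Wdist_one_dirac_right (μ : Measure X) [IsProbabilityMeasure μ] (b : X) :
    Wdist 1 μ (Measure.dirac b) = ∫ x, dist x b ∂μ := by
  simp only [Wdist_comm 1 μ, Wdist_one_dirac_left, dist_comm b]

theorem integrable_dist_of_mem_WSet {μ : Measure X} (hμ : μ ∈ WSet X 1) (a : X) :
    Integrable (fun x => dist a x) μ := by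
  obtain ⟨_, x₀, hx₀⟩ := hμ
  have hx₀_int : Integrable (fun x => dist x x₀) μ := by
    simp only [ENNReal.rpow_one] at hx₀
    simpa only [dist_edist] using integrable_toReal_of_lintegral_ne_top (by fun_prop) hx₀.ne
  refine ((integrable_const (dist a x₀)).add hx₀_int).mono' (by fun_prop) (.of_forall fun x => ?_)
  rw [Real.norm_of_nonneg dist_nonneg]
  exact dist_triangle_right a x x₀

end Wasserstein

theorem msupport_eq_support {X : Type*} [TopologicalSpace X] [MeasurableSpace X]
    (μ : Measure X) : msupport μ = μ.support := by
  simp only [msupport, Measure.support_eq_forall_isOpen, pos_iff_ne_zero]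
  grind

theorem msupport_subset_iff_ae_mem {X : Type*} [TopologicalSpace X] [HereditarilyLindelofSpace X]
    [MeasurableSpace X] {μ : Measure X} {F : Set X} (hF : IsClosed F) :
    msupport μ ⊆ F ↔ ∀ᵐ x ∂μ, x ∈ F := by
  rw [msupport_eq_support]
  exact ⟨fun h => Filter.mem_of_superset Measure.support_mem_ae h,
    Measure.support_subset_of_isClosed hF⟩

section MetricSegment

variable {X : Type*} [PseudoMetricSpace X]

/-- The metric segment between `a` and `b`: the points at which the triangle inequality for
`dist a b` is an equality. It carries the measures `μ` that lie between `δ_a` and `δ_b` in the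
same sense for `W₁`. -/
def metricSegment (a b : X) : Set X := {x | dist a x + dist x b = dist a b}

theorem isClosed_metricSegment (a b : X) : IsClosed (metricSegment a b) :=
  isClosed_eq (by fun_prop) continuous_const

variable [MeasurableSpace X] [OpensMeasurableSpace X] [SecondCountableTopology X]

theorem W1_Q_diagonal_characterization_general {μ : Measure X} (hμ : μ ∈ WSet X 1) (a b : X) :
    dist a b ≤ Wdist 1 (Measure.dirac a) μ + Wdist 1 μ (Measure.dirac b) ∧
    (Wdist 1 (Measure.dirac a) μ + Wdist 1 μ (Measure.dirac b) = dist a b ↔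
      msupport μ ⊆ metricSegment a b) := by
  have : IsProbabilityMeasure μ := hμ.1
  have hleft := integrable_dist_of_mem_WSet hμ a
  have hright : Integrable (fun x => dist x b) μ := by
    simpa only [dist_comm b] using integrable_dist_of_mem_WSet hμ b
  have hboth : Integrable (fun x => dist a x + dist x b) μ := hleft.add hright
  have hsum : Wdist 1 (Measure.dirac a) μ + Wdist 1 μ (Measure.dirac b) =
      ∫ x, (dist a x + dist x b) ∂μ := by
    rw [Wdist_one_dirac_left, Wdist_one_dirac_right, integral_add hleft hright]
  have hconst : ∫ _, dist a b ∂μ = dist a b := by simp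
  have htriangle : (fun _ => dist a b) ≤ fun x => dist a x + dist x b :=
    fun x => dist_triangle a x b
  rw [hsum, msupport_subset_iff_ae_mem (isClosed_metricSegment a b)]
  constructor
  · exact hconst.symm.trans_le (integral_mono (integrable_const _) hboth htriangle)
  · rw [eq_comm, ← hconst, integral_eq_iff_of_ae_le (integrable_const _) hboth
      (.of_forall htriangle)]
    exact Filter.eventually_congr (.of_forall fun x => eq_comm)

end MetricSegment

theorem dist_cLL (x : ↥Qs) :
    dist cLL x = max (x : ℝ × ℝ).1 (x : ℝ × ℝ).2 + 1 := by
  obtain ⟨⟨s, t⟩, ⟨hs, ht⟩, -⟩ := x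
  rw [dist_comm, Subtype.dist_eq, Prod.dist_eq, ← max_add_add_right]
  simp only [cLL, Real.dist_eq, sub_neg_eq_add, abs_of_nonneg (neg_le_iff_add_nonneg.mp hs),
    abs_of_nonneg (neg_le_iff_add_nonneg.mp ht)]

theorem dist_cUR (x : ↥Qs) :
    dist x cUR = 1 - min (x : ℝ × ℝ).1 (x : ℝ × ℝ).2 := by
  obtain ⟨⟨s, t⟩, -, hs, ht⟩ := x
  rw [dist_comm, Subtype.dist_eq, Prod.dist_eq, ← max_sub_sub_left]
  simp only [cUR, Real.dist_eq, abs_of_nonneg (sub_nonneg.mpr hs),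
    abs_of_nonneg (sub_nonneg.mpr ht)]

theorem dist_cLL_cUR : dist cLL cUR = 2 := by
  norm_num [dist_cLL, cUR]

theorem dist_cLL_add_dist_cUR (x : ↥Qs) :
    dist cLL x + dist x cUR = 2 + |(x : ℝ × ℝ).2 - (x : ℝ × ℝ).1| := by
  rw [dist_cLL, dist_cUR, ← max_sub_min_eq_abs]
  ring

theorem metricSegment_cLL_cUR : metricSegment cLL cUR = LplusQ := by
  ext x
  simp only [metricSegment, LplusQ, Set.mem_ofPred_eq, dist_cLL_add_dist_cUR, dist_cLL_cUR,
    add_eq_left, abs_eq_zero, sub_eq_zero]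

/-- For `μ ∈ 𝒲₁(Q, d_m)`, `d_{W₁}(δ_{(-1,-1)}, μ) + d_{W₁}(μ, δ_{(1,1)}) ≥ 2`, with
equality if and only if `μ` is supported on the main diagonal `L₊` of `Q`. -/
theorem W1_Q_diagonal_characterization (μ : Measure ↥Qs) (hμ : μ ∈ WSet ↥Qs 1) :
    2 ≤ Wdist 1 (Measure.dirac cLL) μ + Wdist 1 μ (Measure.dirac cUR) ∧
    (Wdist 1 (Measure.dirac cLL) μ + Wdist 1 μ (Measure.dirac cUR) = 2 ↔
      msupport μ ⊆ LplusQ) := by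
  simpa only [dist_cLL_cUR, metricSegment_cLL_cUR] using
    W1_Q_diagonal_characterization_general hμ cLL cUR
end
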